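/- arXiv:2601.12198 — 2 statements merged into one kernel-verified Lean document; each statement's English description precedes it below -/
import Mathlib

section
/- Let σ > 0, ρ ∈ (−1,1), Σ = σ²·[[1, ρ],[ρ, 1]], and let μ be a Borel probability measure on ℝ² with density x ↦ g(xᵀΣ⁻¹x) with respect to Lebesgue measure for some nonnegative measurable g. Then the pushforward of μ under the resemblance map x = (x₁,x₂) ↦ 2x₁x₂/(x₁² + x₂²) is absolutely continuous with respect to Lebesgue measure, supported on (−1,1), with density r ↦ (1/(π(1 − ρr)))·√((1 − ρ²)/(1 − r²)) for r ∈ (−1,1). -/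
open MeasureTheory Matrix Real

/-!
Diagonalise: with `u = x₀ + x₁` and `v = x₀ - x₁` the resemblance is `(u² - v²) / (u² + v²)`, a
function of the slope `t = v / u` alone, namely `cos 2θ` for `t = tan θ`. The image of an elliptical
law under an invertible linear map is again elliptical, and its slope is Cauchy distributed: writing
Lebesgue measure as `|u| du dt`, the density is a profile evaluated at `u² q(t)`, and integrating
out `u` leaves a multiple of `1 / q(t)`, whatever the profile. The Cauchy law is then pushed forward
along the even map `t ↦ (1 - t²) / (1 + t²)`.
-/

open ProbabilityTheory Set Function
open scoped ENNReal NNReal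

section Lebesgue

theorem lintegral_eq_ofReal_abs_mul_lintegral_comp_mul_left (f : ℝ → ℝ≥0∞) {c : ℝ} (hc : c ≠ 0) :
    ∫⁻ x, f x = ENNReal.ofReal |c| * ∫⁻ t, f (c * t) := by
  conv_lhs => rw [← Real.smul_map_volume_mul_left hc]
  rw [lintegral_smul_measure, smul_eq_mul]
  congr 1
  exact (Homeomorph.mulLeft₀ c hc).measurableEmbedding.lintegral_map f

theorem lintegral_eq_two_mul_setLIntegral_Ioi_of_even {f : ℝ → ℝ≥0∞} (hf : f.Even) :
    ∫⁻ t, f t = 2 * ∫⁻ t in Ioi 0, f t := by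
  have hreflect : ∫⁻ t in Iic 0, f t = ∫⁻ t in Ioi 0, f t := by
    rw [setLIntegral_congr Iio_ae_eq_Iic.symm, ← lintegral_indicator measurableSet_Iio,
      ← lintegral_indicator measurableSet_Ioi, ← lintegral_neg_eq_self]
    refine lintegral_congr fun t => ?_
    simp only [indicator, mem_Iio, mem_Ioi, Left.neg_neg_iff, hf t]
  rw [← lintegral_add_compl f measurableSet_Iic, hreflect, compl_Iic, two_mul]

theorem map_withDensity_of_even {φ φ' : ℝ → ℝ} {p f : ℝ → ℝ≥0∞} (hφ : φ.Even) (hp : p.Even)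
    (hφm : Measurable φ) (hpm : Measurable p) (hfm : Measurable f)
    (hφ' : ∀ t ∈ Ioi 0, HasDerivWithinAt φ (φ' t) (Ioi 0) t) (hinj : InjOn φ (Ioi 0))
    (hpf : ∀ t ∈ Ioi 0, ENNReal.ofReal |φ' t| * f (φ t) = 2 * p t) :
    (volume.withDensity p).map φ = (volume.restrict (φ '' Ioi 0)).withDensity f := by
  refine Measure.ext_of_lintegral _ fun F hF => ?_
  have heven : (fun t => p t * F (φ t)).Even := fun t => by simp only [hφ t, hp t]
  rw [lintegral_map hF hφm, lintegral_withDensity_eq_lintegral_mul _ hpm (by fun_prop),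
    lintegral_withDensity_eq_lintegral_mul _ hfm hF,
    lintegral_image_eq_lintegral_abs_deriv_mul measurableSet_Ioi hφ' hinj]
  simp only [Pi.mul_apply]
  rw [lintegral_eq_two_mul_setLIntegral_Ioi_of_even heven, ← lintegral_const_mul _ (by fun_prop)]
  refine setLIntegral_congr_fun measurableSet_Ioi fun t ht => ?_
  rw [← mul_assoc, ← mul_assoc, hpf t ht]

theorem lintegral_fin_two_eq_lintegral_slope {H : (Fin 2 → ℝ) → ℝ≥0∞} (hH : Measurable H) :
    ∫⁻ x, H x = ∫⁻ t, ∫⁻ u, ENNReal.ofReal |u| * H ![u, u * t] := by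
  have hpair : Measurable fun p : ℝ × ℝ => H ![p.1, p.2] :=
    hH.comp (MeasurableEquiv.finTwoArrow (α := ℝ)).symm.measurable
  have hslope : Measurable fun p : ℝ × ℝ => ENNReal.ofReal |p.1| * H ![p.1, p.1 * p.2] :=
    (by fun_prop : Measurable fun p : ℝ × ℝ => ENNReal.ofReal |p.1|).mul
      (hpair.comp (by fun_prop : Measurable fun p : ℝ × ℝ => (p.1, p.1 * p.2)))
  calc ∫⁻ x, H x = ∫⁻ p : ℝ × ℝ, H ![p.1, p.2] :=
        ((volume_preserving_finTwoArrow ℝ).symm.lintegral_comp hH).symm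
    _ = ∫⁻ u, ∫⁻ v, H ![u, v] := by
        rw [Measure.volume_eq_prod, lintegral_prod _ hpair.aemeasurable]
    _ = ∫⁻ u, ∫⁻ t, ENNReal.ofReal |u| * H ![u, u * t] := by
        refine lintegral_congr_ae ?_
        filter_upwards [Measure.ae_ne volume (0 : ℝ)] with u hu
        rw [lintegral_eq_ofReal_abs_mul_lintegral_comp_mul_left (fun v => H ![u, v]) hu,
          lintegral_const_mul' _ _ ENNReal.ofReal_ne_top]
    _ = ∫⁻ t, ∫⁻ u, ENNReal.ofReal |u| * H ![u, u * t] :=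
        lintegral_lintegral_swap hslope.aemeasurable

theorem lintegral_abs_mul_comp_sq_mul {h : ℝ → ℝ≥0∞} {q : ℝ} (hq : 0 < q) :
    ∫⁻ u, ENNReal.ofReal |u| * h (u ^ 2 * q)
      = ENNReal.ofReal q⁻¹ * ∫⁻ u, ENNReal.ofReal |u| * h (u ^ 2) := by
  have hs : 0 < √q := Real.sqrt_pos.2 hq
  rw [lintegral_eq_ofReal_abs_mul_lintegral_comp_mul_left (fun u => _ * h (u ^ 2)) hs.ne',
    ← mul_assoc, ← ENNReal.ofReal_mul (by positivity),
    ← lintegral_const_mul' _ _ ENNReal.ofReal_ne_top]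
  refine lintegral_congr fun u => ?_
  have hcoeff : q⁻¹ * |√q| * |√q * u| = |u| := by
    rw [abs_mul, abs_of_pos hs, mul_assoc, ← mul_assoc √q, Real.mul_self_sqrt hq.le,
      inv_mul_cancel_left₀ hq.ne']
  rw [← mul_assoc, ← ENNReal.ofReal_mul (by positivity), hcoeff, mul_pow, Real.sq_sqrt hq.le,
    mul_comm q]

end Lebesgue

theorem map_eq_measure_univ_smul {α β : Type*} [MeasurableSpace α] [MeasurableSpace β]
    {μ : Measure α} {ν : Measure β} [IsProbabilityMeasure ν] {f : α → β} {c : ℝ≥0∞}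
    (hf : AEMeasurable f μ) (h : μ.map f = c • ν) : μ.map f = μ univ • ν := by
  have hmass : μ univ = c := by
    rw [← preimage_univ (f := f), ← Measure.map_apply_of_aemeasurable hf MeasurableSet.univ, h,
      Measure.smul_apply, measure_univ, smul_eq_mul, mul_one]
  rw [h, hmass]

section Elliptical

@[fun_prop]
theorem measurable_mulVec {ι : Type*} [Fintype ι] (A : Matrix ι ι ℝ) :
    Measurable fun x : ι → ℝ => A *ᵥ x :=
  (continuous_const.matrix_mulVec continuous_id).measurable

@[fun_prop]
theorem measurable_dotProduct_mulVec_self {ι : Type*} [Fintype ι] (A : Matrix ι ι ℝ) :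
    Measurable fun x : ι → ℝ => x ⬝ᵥ (A *ᵥ x) :=
  (continuous_id.dotProduct (continuous_const.matrix_mulVec continuous_id)).measurable

variable {ι : Type*} [Fintype ι] [DecidableEq ι]

/-- The elliptical measure on `ℝ^ι` with covariance-parameter `S` and profile `g`. It need not be a
probability measure, and `g` takes values in `[0, ∞]`. -/
noncomputable def ellipticalMeasure (S : Matrix ι ι ℝ) (g : ℝ → ℝ≥0∞) : Measure (ι → ℝ) :=
  volume.withDensity fun x => g (x ⬝ᵥ (S⁻¹ *ᵥ x))

theorem dotProduct_inv_mulVec_conj {M : Matrix ι ι ℝ} (hM : M.det ≠ 0) (S : Matrix ι ι ℝ)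
    (x : ι → ℝ) :
    (M *ᵥ x) ⬝ᵥ ((M * S * Mᵀ)⁻¹ *ᵥ (M *ᵥ x)) = x ⬝ᵥ (S⁻¹ *ᵥ x) := by
  have hunit : IsUnit M.det := hM.isUnit
  rw [Matrix.mul_inv_rev, Matrix.mul_inv_rev, mulVec_mulVec, mul_assoc, mul_assoc,
    nonsing_inv_mul M hunit, mul_one, dotProduct_comm, ← mulVec_mulVec, ← transpose_nonsing_inv,
    mulVec_transpose, ← dotProduct_mulVec, mulVec_mulVec, nonsing_inv_mul M hunit, one_mulVec,
    dotProduct_comm]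

theorem map_mulVec_ellipticalMeasure {M : Matrix ι ι ℝ} (hM : M.det ≠ 0) (S : Matrix ι ι ℝ)
    {g : ℝ → ℝ≥0∞} (hg : Measurable g) :
    (ellipticalMeasure S g).map (M *ᵥ ·)
      = ellipticalMeasure (M * S * Mᵀ) (ENNReal.ofReal |M.det⁻¹| • g) := by
  refine Measure.ext_of_lintegral _ fun F hF => ?_
  simp only [ellipticalMeasure, Pi.smul_apply]
  rw [lintegral_map hF (by fun_prop),
    lintegral_withDensity_eq_lintegral_mul _ (by fun_prop) (by fun_prop),
    lintegral_withDensity_eq_lintegral_mul _ (by fun_prop) hF]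
  simp only [Pi.mul_apply, smul_eq_mul, mul_assoc]
  rw [lintegral_const_mul _ (by fun_prop), ← smul_eq_mul, ← lintegral_smul_measure,
    ← Real.map_matrix_volume_pi_eq_smul_volume_pi hM, lintegral_map (by fun_prop) (by fun_prop)]
  simp only [toLin'_apply, ← dotProduct_inv_mulVec_conj hM S, mul_assoc]

end Elliptical

section Slope

variable {S : Matrix (Fin 2) (Fin 2) ℝ}

theorem dotProduct_mulVec_slope (A : Matrix (Fin 2) (Fin 2) ℝ) (u t : ℝ) :
    ![u, u * t] ⬝ᵥ (A *ᵥ ![u, u * t]) = u ^ 2 * (![1, t] ⬝ᵥ (A *ᵥ ![1, t])) := by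
  have hsmul : ![u, u * t] = u • ![1, t] := by simp
  rw [hsmul, mulVec_smul, dotProduct_smul, smul_dotProduct, smul_eq_mul, smul_eq_mul, sq,
    mul_assoc]

theorem inv_dotProduct_inv_mulVec_slope (hS : S.PosDef) (t : ℝ) :
    (![1, t] ⬝ᵥ (S⁻¹ *ᵥ ![1, t]))⁻¹
      = π * √S.det * cauchyPDFReal (S 0 1 / S 0 0) (√S.det / S 0 0).toNNReal t := by
  have hdet : 0 < S.det := hS.det_pos
  have h00 : 0 < S 0 0 := hS.diag_pos
  have hsymm : S 1 0 = S 0 1 := by simpa using hS.isHermitian.apply 0 1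
  have hform : ![1, t] ⬝ᵥ (S⁻¹ *ᵥ ![1, t])
      = S 0 0 / S.det * ((t - S 0 1 / S 0 0) ^ 2 + S.det / S 0 0 ^ 2) := by
    simp only [inv_def, Ring.inverse_eq_inv', adjugate_fin_two, mulVec, dotProduct,
      Matrix.smul_apply, of_apply, cons_val', cons_val_fin_one, smul_eq_mul, Fin.sum_univ_two,
      cons_val_zero, cons_val_one, mul_one, one_mul, mul_neg, neg_mul]
    field_simp
    rw [det_fin_two, hsymm]
    ring
  rw [hform, cauchyPDFReal_def, Real.coe_toNNReal _ (by positivity), div_pow,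
    Real.sq_sqrt hdet.le]
  have hsq : √S.det * √S.det = S.det := Real.mul_self_sqrt hdet.le
  field_simp
  linear_combination -hsq

theorem map_slope_ellipticalMeasure (hS : S.PosDef) {g : ℝ → ℝ≥0∞} (hg : Measurable g) :
    (ellipticalMeasure S g).map (fun x => x 1 / x 0)
      = ellipticalMeasure S g univ •
          cauchyMeasure (S 0 1 / S 0 0) (√S.det / S 0 0).toNNReal := by
  set γ : ℝ≥0 := (√S.det / S 0 0).toNNReal
  have hdet : 0 < S.det := hS.det_pos
  have hγ : γ ≠ 0 := (Real.toNNReal_pos.2 (div_pos (Real.sqrt_pos.2 hdet) hS.diag_pos)).ne'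
  set K : ℝ≥0∞ := ∫⁻ u, ENNReal.ofReal |u| * g (u ^ 2)
  refine map_eq_measure_univ_smul (c := ENNReal.ofReal (π * √S.det) * K) (by fun_prop) ?_
  refine Measure.ext_of_lintegral _ fun F hF => ?_
  rw [lintegral_map hF (by fun_prop), ellipticalMeasure,
    lintegral_withDensity_eq_lintegral_mul _ (by fun_prop) (by fun_prop), lintegral_smul_measure,
    cauchyMeasure_of_scale_ne_zero _ hγ,
    lintegral_withDensity_eq_lintegral_mul _ (by fun_prop) hF, smul_eq_mul,
    ← lintegral_const_mul _ (by fun_prop), lintegral_fin_two_eq_lintegral_slope (by fun_prop)]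
  refine lintegral_congr fun t => ?_
  set q := ![1, t] ⬝ᵥ (S⁻¹ *ᵥ ![1, t])
  have hq : 0 < q := by
    have hne : ![1, t] ≠ 0 := fun h => one_ne_zero (congrFun h 0)
    simpa only [star_trivial] using hS.inv.dotProduct_mulVec_pos hne
  calc ∫⁻ u, ENNReal.ofReal |u| * (g (![u, u * t] ⬝ᵥ (S⁻¹ *ᵥ ![u, u * t])) * F (u * t / u))
      = ∫⁻ u, ENNReal.ofReal |u| * g (u ^ 2 * q) * F t := by
        refine lintegral_congr_ae ?_
        filter_upwards [Measure.ae_ne volume (0 : ℝ)] with u hu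
        rw [dotProduct_mulVec_slope, mul_div_cancel_left₀ t hu, mul_assoc]
    _ = ENNReal.ofReal q⁻¹ * K * F t := by
        rw [lintegral_mul_const _ (by fun_prop), lintegral_abs_mul_comp_sq_mul hq]
    _ = ENNReal.ofReal (π * √S.det) * K * (cauchyPDF (S 0 1 / S 0 0) γ t * F t) := by
        rw [inv_dotProduct_inv_mulVec_slope hS, ENNReal.ofReal_mul (by positivity), cauchyPDF_def]
        ring

theorem map_slope_mulVec_ellipticalMeasure {M D : Matrix (Fin 2) (Fin 2) ℝ} (hM : M.det ≠ 0)
    (hMS : M * S * Mᵀ = D) (hD : D.PosDef) {g : ℝ → ℝ≥0∞} (hg : Measurable g) :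
    (ellipticalMeasure S g).map (fun x => (M *ᵥ x) 1 / (M *ᵥ x) 0)
      = ellipticalMeasure S g univ • cauchyMeasure (D 0 1 / D 0 0) (√D.det / D 0 0).toNNReal := by
  have hslope := map_slope_ellipticalMeasure hD (hg.const_smul (ENNReal.ofReal |M.det⁻¹|))
  rw [← hMS, ← map_mulVec_ellipticalMeasure hM S hg, Measure.map_map (by fun_prop) (by fun_prop),
    hMS] at hslope
  exact map_eq_measure_univ_smul (by fun_prop) hslope

end Slope

section HalfTan

/-- The rational parametrisation `cos θ = (1 - t²) / (1 + t²)` of the cosine by the tangent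
`t = tan (θ / 2)` of the half angle. -/
noncomputable def halfTanCos (t : ℝ) : ℝ := (1 - t ^ 2) / (1 + t ^ 2)

theorem even_halfTanCos : halfTanCos.Even := fun t => by simp only [halfTanCos, neg_sq]

@[fun_prop]
theorem measurable_halfTanCos : Measurable halfTanCos := by
  unfold halfTanCos
  fun_prop

theorem halfTanCos_sqrt {r : ℝ} (hr : r ∈ Ioo (-1) 1) : halfTanCos √((1 - r) / (1 + r)) = r := by
  have hadd : 0 < 1 + r := by linarith [hr.1]
  have hsub : 0 < 1 - r := by linarith [hr.2]
  rw [halfTanCos, Real.sq_sqrt (by positivity)]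
  field_simp
  ring

theorem one_sub_halfTanCos_sq (t : ℝ) : 1 - halfTanCos t ^ 2 = (2 * t / (1 + t ^ 2)) ^ 2 := by
  unfold halfTanCos
  field_simp
  ring

theorem one_sub_halfTanCos_mul_halfTanCos (s t : ℝ) :
    1 - halfTanCos s * halfTanCos t = 2 * (t ^ 2 + s ^ 2) / ((1 + s ^ 2) * (1 + t ^ 2)) := by
  unfold halfTanCos
  field_simp
  ring

theorem abs_halfTanCos_lt_one {t : ℝ} (ht : t ≠ 0) : |halfTanCos t| < 1 := by
  rw [← sq_lt_one_iff_abs_lt_one, ← sub_pos, one_sub_halfTanCos_sq]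
  positivity

theorem injOn_halfTanCos : InjOn halfTanCos (Ioi 0) := by
  intro s hs t ht hst
  rw [halfTanCos, halfTanCos, div_eq_div_iff (by positivity) (by positivity)] at hst
  exact (sq_eq_sq₀ (le_of_lt hs) (le_of_lt ht)).1 (by linarith)

theorem image_halfTanCos_Ioi : halfTanCos '' Ioi 0 = Ioo (-1) 1 := by
  refine Subset.antisymm ?_ fun r hr => ⟨√((1 - r) / (1 + r)), ?_, halfTanCos_sqrt hr⟩
  · rintro _ ⟨t, ht, rfl⟩
    exact abs_lt.1 (abs_halfTanCos_lt_one (ne_of_gt ht))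
  · exact Real.sqrt_pos.2 (div_pos (by linarith [hr.2]) (by linarith [hr.1]))

theorem hasDerivAt_halfTanCos (t : ℝ) :
    HasDerivAt halfTanCos (-(4 * t) / (1 + t ^ 2) ^ 2) t := by
  have hquot := ((hasDerivAt_pow 2 t).const_sub 1).div ((hasDerivAt_pow 2 t).const_add 1)
    (by positivity : 1 + t ^ 2 ≠ 0)
  exact hquot.congr_deriv (by push_cast; ring)

end HalfTan

section Resemblance

/-- The resemblance of the two coordinates of a point of the plane, with junk value `0` at the
origin. -/
noncomputable def resemblance (x : Fin 2 → ℝ) : ℝ := 2 * x 0 * x 1 / (x 0 ^ 2 + x 1 ^ 2)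

/-- The density on `(-1, 1)`, extended by zero, of the resemblance under an elliptical law with
equal variances and correlation `ρ`. -/
noncomputable def resemblancePDFReal (ρ : ℝ) : ℝ → ℝ :=
  (Ioo (-1) 1).indicator fun r => 1 / (π * (1 - ρ * r)) * √((1 - ρ ^ 2) / (1 - r ^ 2))

@[fun_prop]
theorem measurable_resemblancePDFReal (ρ : ℝ) : Measurable (resemblancePDFReal ρ) :=
  Measurable.indicator (by fun_prop) measurableSet_Ioo

theorem abs_deriv_mul_resemblancePDFReal_halfTanCos {γ : ℝ≥0} (hγ : γ ≠ 0) {t : ℝ} (ht : 0 < t) :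
    |-(4 * t) / (1 + t ^ 2) ^ 2| * resemblancePDFReal (halfTanCos γ) (halfTanCos t)
      = 2 * cauchyPDFReal 0 γ t := by
  have hmem : halfTanCos t ∈ Ioo (-1) 1 := abs_lt.1 (abs_halfTanCos_lt_one ht.ne')
  rw [resemblancePDFReal, indicator_of_mem hmem, one_sub_halfTanCos_mul_halfTanCos,
    one_sub_halfTanCos_sq, one_sub_halfTanCos_sq, ← div_pow, Real.sqrt_sq (by positivity),
    neg_div, abs_neg, abs_of_pos (by positivity), cauchyPDFReal_def, sub_zero]
  field_simp
  ring

theorem map_halfTanCos_cauchyMeasure {γ : ℝ≥0} (hγ : γ ≠ 0) :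
    (cauchyMeasure 0 γ).map halfTanCos
      = volume.withDensity fun r => ENNReal.ofReal (resemblancePDFReal (halfTanCos γ) r) := by
  have hp : (cauchyPDF 0 γ).Even := fun t => by
    simp only [cauchyPDF_def, cauchyPDFReal_def, sub_zero, neg_sq]
  have hpf (t : ℝ) (ht : t ∈ Ioi 0) : ENNReal.ofReal |-(4 * t) / (1 + t ^ 2) ^ 2| *
      ENNReal.ofReal (resemblancePDFReal (halfTanCos γ) (halfTanCos t)) = 2 * cauchyPDF 0 γ t := by
    rw [← ENNReal.ofReal_mul (abs_nonneg _), abs_deriv_mul_resemblancePDFReal_halfTanCos hγ ht,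
      ENNReal.ofReal_mul zero_le_two, ENNReal.ofReal_ofNat, cauchyPDF_def]
  have hsupp : (Ioo (-1) 1).indicator
      (fun r => ENNReal.ofReal (resemblancePDFReal (halfTanCos γ) r))
      = fun r => ENNReal.ofReal (resemblancePDFReal (halfTanCos γ) r) := by
    refine indicator_eq_self.2 fun r hr => ?_
    by_contra hmem
    exact hr (by simp only [resemblancePDFReal, indicator_of_notMem hmem, ENNReal.ofReal_zero])
  rw [cauchyMeasure_of_scale_ne_zero _ hγ,
    map_withDensity_of_even even_halfTanCos hp measurable_halfTanCos (measurable_cauchyPDF 0 γ)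
      (measurable_resemblancePDFReal _).ennreal_ofReal
      (fun t _ => (hasDerivAt_halfTanCos t).hasDerivWithinAt) injOn_halfTanCos hpf,
    image_halfTanCos_Ioi, ← withDensity_indicator measurableSet_Ioo, hsupp]

/-- The matrix of `(x₀, x₁) ↦ (x₀ + x₁, x₀ - x₁)`, which diagonalises every symmetric `2 × 2` matrix
with equal diagonal entries. -/
def sumDiff : Matrix (Fin 2) (Fin 2) ℝ := !![1, 1; 1, -1]

theorem det_sumDiff_ne_zero : sumDiff.det ≠ 0 := by
  rw [sumDiff, det_fin_two_of]
  norm_num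

theorem sumDiff_mul_mul_transpose (σ ρ : ℝ) :
    sumDiff * (σ ^ 2 • !![1, ρ; ρ, 1]) * sumDiffᵀ
      = diagonal ![2 * σ ^ 2 * (1 + ρ), 2 * σ ^ 2 * (1 - ρ)] := by
  ext i j
  fin_cases i <;> fin_cases j <;> simp [sumDiff, Matrix.mul_apply, Fin.sum_univ_two] <;> ring

theorem resemblance_eq_halfTanCos {x : Fin 2 → ℝ} (hx : (sumDiff *ᵥ x) 0 ≠ 0) :
    resemblance x = halfTanCos ((sumDiff *ᵥ x) 1 / (sumDiff *ᵥ x) 0) := by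
  have hcoord : sumDiff *ᵥ x = ![x 0 + x 1, x 0 - x 1] := by
    ext i
    fin_cases i <;> simp [sumDiff, mulVec, dotProduct, Fin.sum_univ_two, sub_eq_add_neg]
  simp only [hcoord, cons_val_zero, cons_val_one] at hx ⊢
  have hsq : 0 < (x 0 + x 1) ^ 2 := by positivity
  have hden : x 0 ^ 2 + x 1 ^ 2 ≠ 0 := by nlinarith [sq_nonneg (x 0 - x 1)]
  rw [resemblance, halfTanCos]
  field_simp
  ring

variable {g : ℝ → ℝ≥0∞}

theorem resemblance_ae_eq_halfTanCos (S : Matrix (Fin 2) (Fin 2) ℝ) (hg : Measurable g) :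
    resemblance =ᵐ[ellipticalMeasure S g]
      fun x => halfTanCos ((sumDiff *ᵥ x) 1 / (sumDiff *ᵥ x) 0) := by
  have hac : (ellipticalMeasure S g).map (sumDiff *ᵥ ·) ≪ volume := by
    rw [map_mulVec_ellipticalMeasure det_sumDiff_ne_zero S hg]
    exact withDensity_absolutelyContinuous _ _
  filter_upwards [ae_of_ae_map (by fun_prop) (hac.ae_le (Measure.ae_eval_ne _ 0 0))]
    with x hx using resemblance_eq_halfTanCos hx

theorem map_slope_sumDiff_ellipticalMeasure {σ ρ : ℝ} (hσ : σ ≠ 0) (hρ : ρ ∈ Ioo (-1) 1)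
    (hg : Measurable g) :
    (ellipticalMeasure (σ ^ 2 • !![1, ρ; ρ, 1]) g).map
        (fun x => (sumDiff *ᵥ x) 1 / (sumDiff *ᵥ x) 0)
      = ellipticalMeasure (σ ^ 2 • !![1, ρ; ρ, 1]) g univ •
          cauchyMeasure 0 (√((1 - ρ) / (1 + ρ))).toNNReal := by
  have hadd : 0 < 1 + ρ := by linarith [hρ.1]
  have hsub : 0 < 1 - ρ := by linarith [hρ.2]
  set D : Matrix (Fin 2) (Fin 2) ℝ := diagonal ![2 * σ ^ 2 * (1 + ρ), 2 * σ ^ 2 * (1 - ρ)]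
  have hpos : D.PosDef := by
    refine posDef_diagonal_iff.2 <| Fin.forall_fin_two.2 ⟨?_, ?_⟩
    · change 0 < 2 * σ ^ 2 * (1 + ρ)
      positivity
    · change 0 < 2 * σ ^ 2 * (1 - ρ)
      positivity
  have h00 : D 0 0 = 2 * σ ^ 2 * (1 + ρ) := diagonal_apply_eq _ 0
  have h01 : D 0 1 = 0 := diagonal_apply_ne _ zero_ne_one
  have hdet : D.det = 2 * σ ^ 2 * (1 + ρ) * (2 * σ ^ 2 * (1 - ρ)) := by
    rw [det_diagonal, Fin.prod_univ_two, cons_val_zero, cons_val_one, cons_val_zero]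
  have hscale : √D.det / D 0 0 = √((1 - ρ) / (1 + ρ)) := by
    rw [← Real.sqrt_sq hpos.diag_pos.le, ← Real.sqrt_div' _ (sq_nonneg _), hdet, h00]
    congr 1
    field_simp
  rw [map_slope_mulVec_ellipticalMeasure (D := D) det_sumDiff_ne_zero
    (sumDiff_mul_mul_transpose σ ρ) hpos hg, h01, zero_div, hscale]

end Resemblance

theorem stmt2_general (σ ρ : ℝ) (hσ : σ ≠ 0) (hρ : ρ ∈ Ioo (-1) 1) (g : ℝ → ℝ≥0∞)
    (hg : Measurable g) :
    (ellipticalMeasure (σ ^ 2 • !![1, ρ; ρ, 1]) g).map resemblance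
      = ellipticalMeasure (σ ^ 2 • !![1, ρ; ρ, 1]) g univ •
          volume.withDensity fun r => ENNReal.ofReal (resemblancePDFReal ρ r) := by
  have hscale : (√((1 - ρ) / (1 + ρ))).toNNReal ≠ 0 :=
    (Real.toNNReal_pos.2 <| Real.sqrt_pos.2 <|
      div_pos (by linarith [hρ.2]) (by linarith [hρ.1])).ne'
  rw [Measure.map_congr (resemblance_ae_eq_halfTanCos _ hg),
    ← Function.comp_def halfTanCos, ← Measure.map_map measurable_halfTanCos (by fun_prop),
    map_slope_sumDiff_ellipticalMeasure hσ hρ hg, Measure.map_smul,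
    map_halfTanCos_cauchyMeasure hscale, Real.coe_toNNReal _ (Real.sqrt_nonneg _),
    halfTanCos_sqrt hρ]

/-- For `σ > 0`, `ρ ∈ (-1,1)`, `Σ = σ²·[[1,ρ],[ρ,1]]`, and a Borel probability
measure `μ` on `ℝ²` with density `x ↦ g (xᵀ Σ⁻¹ x)` w.r.t. Lebesgue measure, the pushforward
of `μ` under the resemblance map `x ↦ 2x₁x₂/(x₁²+x₂²)` is absolutely continuous w.r.t.
Lebesgue measure, supported on `(-1,1)`, with density
`r ↦ (1/(π(1-ρr)))·√((1-ρ²)/(1-r²))` there. -/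
theorem stmt2 (σ ρ : ℝ) (hσ : 0 < σ) (hρ : ρ ∈ Set.Ioo (-1 : ℝ) 1)
    (g : ℝ → ℝ) (hg : Measurable g) (hg0 : ∀ t, 0 ≤ g t)
    (μ : Measure (Fin 2 → ℝ)) [IsProbabilityMeasure μ]
    (hμ : μ = volume.withDensity (fun x => ENNReal.ofReal
      (g (x ⬝ᵥ ((σ ^ 2 • !![1, ρ; ρ, 1])⁻¹ *ᵥ x))))) :
    μ.map (fun x => 2 * x 0 * x 1 / ((x 0) ^ 2 + (x 1) ^ 2))
      = volume.withDensity (fun r => ENNReal.ofReal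
          (Set.indicator (Set.Ioo (-1 : ℝ) 1)
            (fun r => 1 / (π * (1 - ρ * r)) * Real.sqrt ((1 - ρ ^ 2) / (1 - r ^ 2))) r)) := by
  have hlaw := stmt2_general σ ρ hσ.ne' hρ (fun t => ENNReal.ofReal (g t)) (by fun_prop)
  rwa [ellipticalMeasure, ← hμ, measure_univ, one_smul] at hlaw
end

section
/- Let Σ = [[σ₁², σ₁₂],[σ₁₂, σ₂²]] be symmetric positive definite and let μ be a Borel probability measure on ℝ² having density x ↦ g(xᵀΣ⁻¹x) with respect to Lebesgue measure for some nonnegative measurable g. Set ξ = 2σ₁₂/(σ₁² + σ₂²). Then the function x ↦ φ_r(x) = ½ log((x₁+x₂)²/(x₁−x₂)²) is μ-integrable and ∫ φ_r dμ = atanh ξ = ½ log((1+ξ)/(1−ξ)). -/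
open MeasureTheory Matrix Real

open scoped ENNReal NNReal InnerProductSpace

/-!
Write `S⁻¹ = Bᵀ B`. The linear map with matrix `B` carries `μ` to a law `ν` on the plane whose
density depends on the norm only, and turns a linear form `x ↦ u ⬝ᵥ x` into `z ↦ ⟪w, z⟫` with
`‖w‖² = u ⬝ᵥ S *ᵥ u`. Since `ν` is rotation invariant, the law of `arg z` under `ν` is translation
invariant on the circle `ℝ / 2πℤ`, hence uniform by uniqueness of Haar measure. Now
`⟪w, z⟫ = ‖w‖ ‖z‖ cos (arg z - arg w)`, so `log |⟪w₁, z⟫ / ⟪w₂, z⟫|` equals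
`log (‖w₁‖ / ‖w₂‖) + log |cos (arg z - arg w₁)| - log |cos (arg z - arg w₂)|`,
and the last two terms are integrable with the same integral. The factor `‖z‖` has to be cancelled
before integrating, because `log |⟪w, z⟫|` alone need not be integrable. For `φ_r` the two forms are
`x₁ ± x₂`, whose values of `u ⬝ᵥ S *ᵥ u` are `σ₁² ± 2σ₁₂ + σ₂²`.

Absolute values are omitted below because `Real.log t = log |t|`.
-/

section RotationInvariance

lemma map_withDensity_comp {α β : Type*} [MeasurableSpace α] [MeasurableSpace β]
    (e : α ≃ᵐ β) (μ : Measure α) (f : β → ℝ≥0∞) :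
    (μ.withDensity fun x => f (e x)).map e = (μ.map e).withDensity f := by
  ext s hs
  rw [e.map_apply, withDensity_apply _ (e.measurable hs), withDensity_apply _ hs, e.restrict_map,
    lintegral_map_equiv]

lemma map_linearIsometryEquiv_addHaar {E : Type*} [NormedAddCommGroup E] [InnerProductSpace ℝ E]
    [FiniteDimensional ℝ E] [MeasurableSpace E] [BorelSpace E] (μ : Measure E)
    [μ.IsAddHaarMeasure] (L : E ≃ₗᵢ[ℝ] E) : μ.map L = μ := by
  rw [Measure.isAddLeftInvariant_eq_smul μ volume, Measure.map_smul,
    L.measurePreserving.map_eq]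

lemma map_linearIsometryEquiv_withDensity_inner_self {E : Type*} [NormedAddCommGroup E]
    [InnerProductSpace ℝ E] [FiniteDimensional ℝ E] [MeasurableSpace E] [BorelSpace E]
    (m : Measure E) [m.IsAddHaarMeasure] (k : ℝ → ℝ≥0∞) (L : E ≃ₗᵢ[ℝ] E) :
    (m.withDensity fun z => k ⟪z, z⟫_ℝ).map L = m.withDensity fun z => k ⟪z, z⟫_ℝ :=
  calc (m.withDensity fun z => k ⟪z, z⟫_ℝ).map L
      = (m.withDensity fun z => k ⟪L z, L z⟫_ℝ).map L := by simp only [L.inner_map_map]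
    _ = (m.map L).withDensity fun z => k ⟪z, z⟫_ℝ :=
        map_withDensity_comp L.toHomeomorph.toMeasurableEquiv m fun z => k ⟪z, z⟫_ℝ
    _ = m.withDensity fun z => k ⟪z, z⟫_ℝ := by rw [map_linearIsometryEquiv_addHaar]

lemma smulInvariantMeasure_withDensity_inner_self (m : Measure ℂ) [m.IsAddHaarMeasure]
    (k : ℝ → ℝ≥0∞) : SMulInvariantMeasure Circle ℂ (m.withDensity fun z => k ⟪z, z⟫_ℝ) :=
  ((smulInvariantMeasure_tfae Circle _).out 0 5).2 fun a =>
    map_linearIsometryEquiv_withDensity_inner_self m k (rotation a)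

end RotationInvariance

section Whitening

open scoped MatrixOrder in
lemma exists_linearEquiv_inner_eq_dotProduct_mulVec {ι : Type*} [Fintype ι]
    {M : Matrix ι ι ℝ} (hM : M.PosDef) :
    ∃ R : (ι → ℝ) ≃ₗ[ℝ] EuclideanSpace ℝ ι, ∀ x y, ⟪R x, R y⟫_ℝ = x ⬝ᵥ M *ᵥ y := by
  classical
  obtain ⟨B, rfl⟩ : ∃ B, M = star B * B :=
    CStarAlgebra.nonneg_iff_eq_star_mul_self.1 hM.posSemidef.nonneg
  have hB : IsUnit B := isUnit_of_mul_isUnit_right hM.isUnit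
  refine ⟨(LinearEquiv.ofBijective B.mulVecLin
    ⟨mulVec_injective_of_isUnit hB, mulVec_surjective_iff_isUnit.2 hB⟩).trans
      (WithLp.linearEquiv 2 ℝ (ι → ℝ)).symm, fun x y => ?_⟩
  calc
    _ = (B *ᵥ y) ⬝ᵥ star (B *ᵥ x) := rfl
    _ = x ⬝ᵥ (star B * B) *ᵥ y := by
      rw [star_eq_conjTranspose, conjTranspose_eq_transpose_of_trivial, ← mulVec_mulVec,
        dotProduct_mulVec, vecMul_transpose, dotProduct_comm, star_trivial]

lemma exists_continuousLinearEquiv_complex_inner_eq {M : Matrix (Fin 2) (Fin 2) ℝ}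
    (hM : M.PosDef) : ∃ R : (Fin 2 → ℝ) ≃L[ℝ] ℂ, ∀ x y, ⟪R x, R y⟫_ℝ = x ⬝ᵥ M *ᵥ y := by
  obtain ⟨R, hR⟩ := exists_linearEquiv_inner_eq_dotProduct_mulVec hM
  let L := Complex.orthonormalBasisOneI.repr.symm
  refine ⟨(R.trans L.toLinearEquiv).toContinuousLinearEquiv, fun x y => ?_⟩
  rw [← hR]
  exact L.inner_map_map _ _

lemma inner_apply_mulVec_apply {ι E : Type*} [Fintype ι] [DecidableEq ι] [NormedAddCommGroup E]
    [InnerProductSpace ℝ E] {S : Matrix ι ι ℝ} (hsymm : S.IsSymm) (hunit : IsUnit S)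
    {R : (ι → ℝ) → E} (hR : ∀ x y, ⟪R x, R y⟫_ℝ = x ⬝ᵥ S⁻¹ *ᵥ y) (u x : ι → ℝ) :
    ⟪R (S *ᵥ u), R x⟫_ℝ = u ⬝ᵥ x := by
  have := hunit.invertible
  rw [hR, ← vecMul_transpose, hsymm.eq, dotProduct_mulVec, vecMul_vecMul, mul_inv_of_invertible,
    vecMul_one]

end Whitening

section Circle

lemma volume_addCircle_singleton {T : ℝ} [hT : Fact (0 < T)] (t : AddCircle T) :
    volume {t} = 0 := by
  simpa [hT.out.le] using AddCircle.volume_closedBall T (x := t) 0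

lemma measurable_periodic_lift {T : ℝ} {β : Type*} [MeasurableSpace β] {f : ℝ → β}
    (hf : Function.Periodic f T) (hm : Measurable f) : Measurable hf.lift :=
  measurable_from_quotient.2 hm

end Circle

section UniformArgument

local instance fact_two_pi_pos : Fact (0 < 2 * π) := ⟨two_pi_pos⟩

lemma measurable_arg_coe : Measurable fun z : ℂ => (z.arg : AddCircle (2 * π)) :=
  AddCircle.measurable_mk'.comp Complex.measurable_arg

lemma arg_exp_smul_coe (θ : ℝ) {z : ℂ} (hz : z ≠ 0) :
    ((Circle.exp θ • z).arg : AddCircle (2 * π)) = θ + z.arg :=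
  (Complex.arg_mul_coe_angle (Circle.exp θ).coe_ne_zero hz).trans <|
    congrArg (· + (z.arg : Angle)) (Angle.arg_toCircle θ)

lemma inner_eq_norm_mul_norm_mul_cos_arg_sub (w z : ℂ) :
    ⟪w, z⟫_ℝ = ‖w‖ * ‖z‖ * cos (z.arg - w.arg) := by
  rw [Complex.inner, Complex.mul_re, Complex.conj_re, Complex.conj_im, cos_sub,
    ← Complex.norm_mul_cos_arg z, ← Complex.norm_mul_sin_arg z,
    ← Complex.norm_mul_cos_arg w, ← Complex.norm_mul_sin_arg w]
  ring

variable {ν : Measure ℂ} [SMulInvariantMeasure Circle ℂ ν]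

lemma isAddLeftInvariant_map_arg_coe (h0 : ν {0} = 0) :
    (ν.map fun z => (z.arg : AddCircle (2 * π))).IsAddLeftInvariant := by
  refine ⟨fun t => ?_⟩
  induction t using QuotientAddGroup.induction_on with | H θ => ?_
  have hequivariant : (fun z => (θ : AddCircle (2 * π)) + z.arg) =ᵐ[ν]
      fun z => ((Circle.exp θ • z).arg : AddCircle (2 * π)) := by
    filter_upwards [measure_eq_zero_iff_ae_notMem.1 h0] with z hz
    exact (arg_exp_smul_coe θ hz).symm
  calc (ν.map fun z => (z.arg : AddCircle (2 * π))).map (fun t => (θ : AddCircle (2 * π)) + t)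
      = ν.map fun z => (θ : AddCircle (2 * π)) + z.arg :=
        Measure.map_map (measurable_const_add _) measurable_arg_coe
    _ = ν.map fun z => ((Circle.exp θ • z).arg : AddCircle (2 * π)) :=
        Measure.map_congr hequivariant
    _ = (ν.map (Circle.exp θ • ·)).map fun z => (z.arg : AddCircle (2 * π)) :=
        (Measure.map_map measurable_arg_coe (measurable_const_smul _)).symm
    _ = ν.map fun z => (z.arg : AddCircle (2 * π)) := by
        rw [(measurePreserving_smul (Circle.exp θ) ν).map_eq]

variable [IsFiniteMeasure ν]

lemma map_arg_coe (h0 : ν {0} = 0) :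
    ν.map (fun z => (z.arg : AddCircle (2 * π))) =
      (ν Set.univ / ENNReal.ofReal (2 * π)) • volume := by
  have := isAddLeftInvariant_map_arg_coe h0
  obtain ⟨c, hc⟩ : ∃ c : ℝ≥0, ν.map (fun z => (z.arg : AddCircle (2 * π))) = c • volume :=
    ⟨_, Measure.isAddInvariant_eq_smul_of_compactSpace _ _⟩
  have hmass : ν Set.univ = c * ENNReal.ofReal (2 * π) := by
    simpa only [Measure.map_apply measurable_arg_coe MeasurableSet.univ, Set.preimage_univ,
      Measure.smul_apply, AddCircle.measure_univ, ENNReal.smul_def, smul_eq_mul]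
      using congrArg (fun ρ => ρ Set.univ) hc
  rw [hc, hmass, ENNReal.mul_div_cancel_right (by simp [pi_pos]) ENNReal.ofReal_ne_top]
  rfl

lemma measurePreserving_arg_sub_coe (h0 : ν {0} = 0) (α : ℝ) :
    MeasurePreserving (fun z : ℂ => ((z.arg - α : ℝ) : AddCircle (2 * π))) ν
      ((ν Set.univ / ENNReal.ofReal (2 * π)) • volume) :=
  ((measurePreserving_sub_right volume (α : AddCircle (2 * π))).smul_measure _).comp
    ⟨measurable_arg_coe, map_arg_coe h0⟩

lemma ae_cos_arg_sub_ne_zero (h0 : ν {0} = 0) (α : ℝ) : ∀ᵐ z ∂ν, cos (z.arg - α) ≠ 0 := by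
  have hne (t : AddCircle (2 * π)) : ∀ᵐ z ∂ν, ((z.arg - α : ℝ) : AddCircle (2 * π)) ≠ t :=
    (measurePreserving_arg_sub_coe h0 α).quasiMeasurePreserving.ae <|
      Measure.ae_smul_measure (measure_eq_zero_iff_ae_notMem.1 (volume_addCircle_singleton t)) _
  filter_upwards [hne (π / 2 : ℝ), hne (-π / 2 : ℝ)] with z hpos hneg hcos
  exact (Angle.cos_eq_zero_iff (θ := ((z.arg - α : ℝ) : Angle)).1 hcos).elim hpos hneg

lemma integrable_comp_arg_sub {f : ℝ → ℝ} (hf : Function.Periodic f (2 * π)) (hm : Measurable f)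
    (h0 : ν {0} = 0) (hint : IntervalIntegrable f volume (-π) π) (α : ℝ) :
    Integrable (fun z : ℂ => f (z.arg - α)) ν := by
  have hvol : Integrable hf.lift (volume : Measure (AddCircle (2 * π))) := by
    rw [← (AddCircle.measurePreserving_mk (2 * π) (-π)).integrable_comp
      (measurable_periodic_lift hf hm).aestronglyMeasurable, show -π + 2 * π = π by ring]
    exact (intervalIntegrable_iff_integrableOn_Ioc_of_le (neg_le_self pi_pos.le)).1 hint
  exact (measurePreserving_arg_sub_coe h0 α).integrable_comp_of_integrable <| hvol.smul_measure <|
    ENNReal.div_ne_top (measure_ne_top _ _) (by simp [pi_pos])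

lemma integral_comp_arg_sub {f : ℝ → ℝ} (hf : Function.Periodic f (2 * π)) (hm : Measurable f)
    (h0 : ν {0} = 0) (α : ℝ) :
    ∫ z : ℂ, f (z.arg - α) ∂ν = ν.real Set.univ / (2 * π) * ∫ θ in -π..π, f θ := by
  have hmp := measurePreserving_arg_sub_coe (ν := ν) h0 α
  calc ∫ z : ℂ, f (z.arg - α) ∂ν
      = ∫ t, hf.lift t ∂(ν Set.univ / ENNReal.ofReal (2 * π)) • volume := by
        rw [← hmp.map_eq, integral_map hmp.aemeasurable
          (measurable_periodic_lift hf hm).aestronglyMeasurable]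
        rfl
    _ = ν.real Set.univ / (2 * π) * ∫ t, hf.lift t := by
        rw [integral_smul_measure, ENNReal.toReal_div, ENNReal.toReal_ofReal two_pi_pos.le,
          measureReal_def, smul_eq_mul]
    _ = ν.real Set.univ / (2 * π) * ∫ θ in -π..π, f θ := by
        rw [← AddCircle.intervalIntegral_preimage (2 * π) (-π), show -π + 2 * π = π by ring]
        rfl

lemma integrable_log_cos_arg_sub (h0 : ν {0} = 0) (α : ℝ) :
    Integrable (fun z : ℂ => log (cos (z.arg - α))) ν :=
  integrable_comp_arg_sub (cos_periodic.comp log) (measurable_log.comp measurable_cos) h0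
    intervalIntegrable_log_cos α

lemma integral_log_cos_arg_sub_eq (h0 : ν {0} = 0) (α β : ℝ) :
    ∫ z : ℂ, log (cos (z.arg - α)) ∂ν = ∫ z : ℂ, log (cos (z.arg - β)) ∂ν :=
  have key := integral_comp_arg_sub (ν := ν) (cos_periodic.comp log)
    (measurable_log.comp measurable_cos) h0
  (key α).trans (key β).symm

lemma log_inner_div_inner_ae_eq (h0 : ν {0} = 0) {w₁ w₂ : ℂ} (hw₁ : w₁ ≠ 0) (hw₂ : w₂ ≠ 0) :
    (fun z => log (⟪w₁, z⟫_ℝ / ⟪w₂, z⟫_ℝ)) =ᵐ[ν] fun z =>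
      log (‖w₁‖ / ‖w₂‖) + (log (cos (z.arg - w₁.arg)) - log (cos (z.arg - w₂.arg))) := by
  filter_upwards [measure_eq_zero_iff_ae_notMem.1 h0, ae_cos_arg_sub_ne_zero h0 w₁.arg,
    ae_cos_arg_sub_ne_zero h0 w₂.arg] with z hz hcos₁ hcos₂
  have hnorm : ‖z‖ ≠ 0 := norm_ne_zero_iff.2 hz
  have hratio : ‖w₁‖ / ‖w₂‖ ≠ 0 := div_ne_zero (norm_ne_zero_iff.2 hw₁) (norm_ne_zero_iff.2 hw₂)
  rw [← log_div hcos₁ hcos₂, ← log_mul hratio (div_ne_zero hcos₁ hcos₂), div_mul_div_comm,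
    inner_eq_norm_mul_norm_mul_cos_arg_sub, inner_eq_norm_mul_norm_mul_cos_arg_sub,
    mul_right_comm, mul_right_comm ‖w₂‖, mul_div_mul_right _ _ hnorm]

lemma integrable_log_inner_div_inner (h0 : ν {0} = 0) {w₁ w₂ : ℂ} (hw₁ : w₁ ≠ 0) (hw₂ : w₂ ≠ 0) :
    Integrable (fun z => log (⟪w₁, z⟫_ℝ / ⟪w₂, z⟫_ℝ)) ν :=
  ((integrable_const _).add ((integrable_log_cos_arg_sub h0 _).sub
    (integrable_log_cos_arg_sub h0 _))).congr (log_inner_div_inner_ae_eq h0 hw₁ hw₂).symm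

lemma integral_log_inner_div_inner (h0 : ν {0} = 0) {w₁ w₂ : ℂ} (hw₁ : w₁ ≠ 0) (hw₂ : w₂ ≠ 0) :
    ∫ z, log (⟪w₁, z⟫_ℝ / ⟪w₂, z⟫_ℝ) ∂ν = ν.real Set.univ * log (‖w₁‖ / ‖w₂‖) := by
  have hcos₁ := integrable_log_cos_arg_sub (ν := ν) h0 w₁.arg
  have hcos₂ := integrable_log_cos_arg_sub (ν := ν) h0 w₂.arg
  rw [integral_congr_ae (log_inner_div_inner_ae_eq h0 hw₁ hw₂),
    integral_add (integrable_const _) (by exact hcos₁.sub hcos₂), integral_sub hcos₁ hcos₂,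
    integral_log_cos_arg_sub_eq h0 w₁.arg w₂.arg, sub_self, add_zero, integral_const, smul_eq_mul]

end UniformArgument

lemma half_mul_log_sq_div_sq (a b : ℝ) : 1 / 2 * log (a ^ 2 / b ^ 2) = log (a / b) := by
  rw [← div_pow, log_pow]
  ring

lemma dotProduct_mulVec_one_one_div {a b c : ℝ} (h : a + b ≠ 0) :
    ![1, 1] ⬝ᵥ !![a, c; c, b] *ᵥ ![1, 1] / ![1, -1] ⬝ᵥ !![a, c; c, b] *ᵥ ![1, -1] =
      (1 + 2 * c / (a + b)) / (1 - 2 * c / (a + b)) := by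
  rw [one_add_div h, one_sub_div h, div_div_div_cancel_right₀ h]
  simp only [dotProduct, mulVec, Fin.sum_univ_two, of_apply, cons_val_zero, cons_val_one]
  ring_nf

theorem stmt3_general {S : Matrix (Fin 2) (Fin 2) ℝ} (hS : S.PosDef) (k : ℝ → ℝ≥0∞)
    {μ : Measure (Fin 2 → ℝ)} [IsFiniteMeasure μ]
    (hμ : μ = volume.withDensity fun x => k (x ⬝ᵥ S⁻¹ *ᵥ x))
    {u v : Fin 2 → ℝ} (hu : u ≠ 0) (hv : v ≠ 0) :
    Integrable (fun x => 1 / 2 * log ((u ⬝ᵥ x) ^ 2 / (v ⬝ᵥ x) ^ 2)) μ ∧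
      ∫ x, 1 / 2 * log ((u ⬝ᵥ x) ^ 2 / (v ⬝ᵥ x) ^ 2) ∂μ =
        μ.real Set.univ * (1 / 2 * log (u ⬝ᵥ S *ᵥ u / v ⬝ᵥ S *ᵥ v)) := by
  obtain ⟨R, hR⟩ := exists_continuousLinearEquiv_complex_inner_eq hS.inv
  let e : (Fin 2 → ℝ) ≃ᵐ ℂ := R.toHomeomorph.toMeasurableEquiv
  have hν : μ.map e = (volume.map R).withDensity fun z => k ⟪z, z⟫_ℝ := by
    simp_rw [hμ, ← hR]
    exact map_withDensity_comp e volume fun z => k ⟪z, z⟫_ℝ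
  have h0 : μ.map e {0} = 0 := hν ▸ measure_singleton 0
  have : SMulInvariantMeasure Circle ℂ (μ.map e) :=
    hν ▸ smulInvariantMeasure_withDensity_inner_self _ k
  have hinner (u x : Fin 2 → ℝ) : ⟪R (S *ᵥ u), e x⟫_ℝ = u ⬝ᵥ x :=
    inner_apply_mulVec_apply (isHermitian_iff_isSymm.1 hS.isHermitian) hS.isUnit hR u x
  have hnorm (u : Fin 2 → ℝ) : ‖R (S *ᵥ u)‖ ^ 2 = u ⬝ᵥ S *ᵥ u := by
    rw [← real_inner_self_eq_norm_sq]
    exact hinner u _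
  have hne {u : Fin 2 → ℝ} (hu : u ≠ 0) : R (S *ᵥ u) ≠ 0 := by
    rw [← norm_ne_zero_iff, ← pow_ne_zero_iff two_ne_zero, hnorm]
    exact (hS.dotProduct_mulVec_pos hu).ne'
  have hint := integrable_log_inner_div_inner h0 (hne hu) (hne hv)
  have hval := integral_log_inner_div_inner h0 (hne hu) (hne hv)
  rw [integrable_map_equiv] at hint
  rw [integral_map_equiv] at hval
  simp only [hinner, map_measureReal_apply e.measurable MeasurableSet.univ, Set.preimage_univ,
    Function.comp_def] at hint hval
  simp only [half_mul_log_sq_div_sq, ← hnorm]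
  exact ⟨hint, hval⟩

/-- For a symmetric positive definite `Σ = [[σ₁², σ₁₂],[σ₁₂, σ₂²]]` and a Borel
probability measure `μ` on `ℝ²` with density `x ↦ g (xᵀ Σ⁻¹ x)` w.r.t. Lebesgue measure,
with `ξ = 2σ₁₂/(σ₁²+σ₂²)`, the similarity measure `φ_r(x) = ½ log((x₁+x₂)²/(x₁-x₂)²)`
is `μ`-integrable with `∫ φ_r dμ = atanh ξ = ½ log((1+ξ)/(1-ξ))`. -/
theorem stmt3 (σ₁ σ₂ σ₁₂ : ℝ) (hσ₁ : 0 < σ₁) (hσ₂ : 0 < σ₂)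
    (hpd : (!![σ₁ ^ 2, σ₁₂; σ₁₂, σ₂ ^ 2]).PosDef)
    (g : ℝ → ℝ) (hg : Measurable g) (hg0 : ∀ t, 0 ≤ g t)
    (μ : Measure (Fin 2 → ℝ)) [IsProbabilityMeasure μ]
    (hμ : μ = volume.withDensity (fun x => ENNReal.ofReal
      (g (x ⬝ᵥ ((!![σ₁ ^ 2, σ₁₂; σ₁₂, σ₂ ^ 2])⁻¹ *ᵥ x))))) :
    Integrable (fun x : Fin 2 → ℝ =>
        (1 / 2) * Real.log ((x 0 + x 1) ^ 2 / (x 0 - x 1) ^ 2)) μ ∧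
    ∫ x : Fin 2 → ℝ, (1 / 2) * Real.log ((x 0 + x 1) ^ 2 / (x 0 - x 1) ^ 2) ∂μ
      = (1 / 2) * Real.log ((1 + 2 * σ₁₂ / (σ₁ ^ 2 + σ₂ ^ 2))
          / (1 - 2 * σ₁₂ / (σ₁ ^ 2 + σ₂ ^ 2))) := by
  have h := stmt3_general hpd (fun t => ENNReal.ofReal (g t)) hμ (u := ![1, 1]) (v := ![1, -1])
    (by simp) (by simp)
  rw [dotProduct_mulVec_one_one_div (by positivity)] at h
  simpa [dotProduct, ← sub_eq_add_neg] using h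
end
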